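/- Let λ > 0 and β ∈ (0,1]. For every n ∈ ℕ₀, the Appell polynomial at zero satisfies A_n^{λ,β}(0) = ∑_{k=0}^n (−1)^k k! B_{n,k}(M_{λ,β}(1), M_{λ,β}(2), …, M_{λ,β}(n−k+1)), where B_{n,k} are the Bell polynomials and M_{λ,β}(j) is the j-th moment of the fractional Poisson measure. -/

import Mathlib

/-!
By the binomial expansion, `∑ m, π {m} w ^ m = E_β(λ(w - 1))`, so `z ↦ E_β(λ(e ^ z - 1))` is the
complex moment generating function of `π = π_{λ,β}` and its Taylor coefficients at `0` are the
moments of `π` divided by factorials. Expanding its reciprocal in a geometric series, and the powers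
in that series by the multinomial theorem, produces the Bell polynomials.

That the masses of `π` are nonnegative is the complete monotonicity of `x ↦ E_β(-x)`. Euler's limit
`n ^ (-βk) [z ^ n] (1 - z) ^ (-(βk + 1)) → 1 / Γ(βk + 1)`, applied termwise with `c = λ / n ^ β`,
exhibits the mass at `m` as the limit of
`[z ^ n] c ^ m (1 - z) ^ (β - 1) / ((1 - z) ^ β + c) ^ (m + 1)`.
This coefficient is nonnegative because `(1 - z) ^ (β - 1)` has nonnegative coefficients, while
`(1 - z) ^ β + c` has a positive constant term and its other coefficients are nonpositive.
-/

open MeasureTheory Finset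
open scoped ENNReal NNReal

noncomputable section

/-- The complex Mittag-Leffler function `E_β(z) = ∑ zⁿ / Γ(βn+1)`. -/
def mittagLeffler (β : ℝ) (z : ℂ) : ℂ :=
  ∑' n : ℕ, z ^ n / (Complex.Gamma ((β * n + 1 : ℝ) : ℂ))

/-- The real Mittag-Leffler function `E_β(x) = ∑ xⁿ / Γ(βn+1)`. -/
def mittagLefflerR (β : ℝ) (x : ℝ) : ℝ :=
  ∑' n : ℕ, x ^ n / Real.Gamma (β * n + 1)

/-- The fractional Poisson measure `π_{λ,β} = ∑_k (λᵏ/k!) E_β⁽ᵏ⁾(-λ) δ_k` on `ℝ`. -/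
def fracPoisson (lam β : ℝ) : Measure ℝ :=
  Measure.sum fun k : ℕ =>
    ENNReal.ofReal (lam ^ k / k.factorial * iteratedDeriv k (mittagLefflerR β) (-lam)) •
      Measure.dirac (k : ℝ)

/-- The Poisson measure with rate `μ` on `ℝ`, `π_μ({k}) = (μᵏ/k!) e^{-μ}`. -/
def poissonMeasureR (μ : ℝ) : Measure ℝ :=
  Measure.sum fun k : ℕ =>
    ENNReal.ofReal (μ ^ k / k.factorial * Real.exp (-μ)) • Measure.dirac (k : ℝ)

/-- The generalized Appell polynomials
`C_n^{λ,β}(x) = dⁿ/dzⁿ [e^{x log(1+z)} / E_β(λz)]` at `z = 0`. -/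
def genAppell (lam β : ℝ) (n : ℕ) (x : ℂ) : ℂ :=
  iteratedDeriv n
    (fun z : ℂ => Complex.exp (x * Complex.log (1 + z)) / mittagLeffler β (lam * z)) 0

/-- The Appell polynomials `A_n^{λ,β}(x) = dⁿ/dzⁿ [e^{zx} / E_β(λ(eᶻ-1))]` at `z = 0`. -/
def appell (lam β : ℝ) (n : ℕ) (x : ℂ) : ℂ :=
  iteratedDeriv n
    (fun z : ℂ => Complex.exp (z * x) / mittagLeffler β (lam * (Complex.exp z - 1))) 0

/-- Stirling numbers of the first kind, via `(log(1+z))^k = k! ∑_{n≥k} s(n,k) zⁿ/n!`. -/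
def stirlingFst (n k : ℕ) : ℝ :=
  iteratedDeriv n (fun x : ℝ => (Real.log (1 + x)) ^ k) 0 / k.factorial

/-- Stirling numbers of the second kind, via `(eᶻ-1)^k = k! ∑_{n≥k} S(n,k) zⁿ/n!`. -/
def stirlingSnd (n k : ℕ) : ℝ :=
  iteratedDeriv n (fun x : ℝ => (Real.exp x - 1) ^ k) 0 / k.factorial

/-- The `n`-th moment of the fractional Poisson measure. -/
def fpMoment (lam β : ℝ) (n : ℕ) : ℝ := ∫ x, x ^ n ∂(fracPoisson lam β)

/-- `M̃_{λ,β}(m) = m! λᵐ / Γ(mβ+1)`. -/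
def tildeM (lam β : ℝ) (m : ℕ) : ℝ := m.factorial * lam ^ m / Real.Gamma (m * β + 1)

/-- The (partial exponential) Bell polynomials `B_{n,k}(x₁, …, x_{n-k+1})`. -/
def bellPoly (n k : ℕ) (x : ℕ → ℂ) : ℂ :=
  ∑ j ∈ (Fintype.piFinset fun _ : Fin (n - k + 1) => Finset.range (n + 1)).filter
      (fun j => (∑ i, j i) = k ∧ (∑ i, (i.1 + 1) * j i) = n),
    (n.factorial : ℂ) / (∏ i, ((j i).factorial : ℂ)) *
      ∏ i, (x (i.1 + 1) / ((i.1 + 1).factorial : ℂ)) ^ j i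

open Filter Topology ProbabilityTheory

section NegBinomial

theorem succ_mul_multichoose_succ {R : Type*} [CommRing R] [BinomialRing R] (a : R) (n : ℕ) :
    (n + 1) * Ring.multichoose a (n + 1) = (a + n) * Ring.multichoose a n := by
  have := BinomialRing.toIsAddTorsionFree (R := R)
  have h (m : ℕ) : (m.factorial : R) * Ring.multichoose a m = (ascPochhammer R m).eval a := by
    rw [← nsmul_eq_mul, Ring.factorial_nsmul_multichoose_eq_ascPochhammer,
      Polynomial.ascPochhammer_smeval_eq_eval]
  refine nsmul_right_injective n.factorial_ne_zero ?_
  simp only [nsmul_eq_mul]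
  calc (n.factorial : R) * ((n + 1) * Ring.multichoose a (n + 1))
      = (n + 1).factorial * Ring.multichoose a (n + 1) := by
        rw [Nat.factorial_succ]; push_cast; ring
    _ = n.factorial * Ring.multichoose a n * (a + n) := by
        rw [h, h, ascPochhammer_succ_eval]
    _ = n.factorial * ((a + n) * Ring.multichoose a n) := by ring

section Ordered

variable {R : Type*} [CommRing R] [LinearOrder R] [IsStrictOrderedRing R] [BinomialRing R]

theorem multichoose_nonneg {a : R} (ha : 0 ≤ a) (n : ℕ) : 0 ≤ Ring.multichoose a n := by
  induction n with
  | zero => simp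
  | succ n ih =>
    refine nonneg_of_mul_nonneg_right ?_ (by positivity : (0 : R) < n + 1)
    rw [succ_mul_multichoose_succ]
    positivity

theorem multichoose_neg_succ_nonpos {b : R} (hb0 : 0 ≤ b) (hb1 : b ≤ 1) (n : ℕ) :
    Ring.multichoose (-b) (n + 1) ≤ 0 := by
  induction n with
  | zero => simpa
  | succ n ih =>
    refine nonpos_of_mul_nonpos_right ?_ (by positivity : (0 : R) < (n + 1 : ℕ) + 1)
    rw [succ_mul_multichoose_succ]
    refine mul_nonpos_of_nonneg_of_nonpos ?_ ih
    push_cast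
    linarith [n.cast_nonneg (α := R)]

end Ordered

theorem multichoose_eq_prod_div {R : Type*} [Field R] [CharZero R] [BinomialRing R] (a : R)
    (n : ℕ) : Ring.multichoose a n = (∏ j ∈ range n, (a + j)) / n.factorial := by
  induction n with
  | zero => simp
  | succ n ih =>
    rw [← mul_right_inj' (n.cast_add_one_ne_zero (R := R)), succ_mul_multichoose_succ, ih,
      prod_range_succ, Nat.factorial_succ]
    push_cast
    field_simp

section Series

open PowerSeries

variable {R : Type*} [CommRing R] [BinomialRing R]

/-- The formal power series `(1 - X) ^ (-a)` over a binomial ring, the generating function of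
`n ↦ Ring.multichoose a n`. -/
def negBinomialSeries (a : R) : PowerSeries R :=
  PowerSeries.mk (Ring.multichoose a)

@[simp]
theorem coeff_negBinomialSeries (a : R) (n : ℕ) :
    coeff n (negBinomialSeries a) = Ring.multichoose a n :=
  coeff_mk n _

theorem negBinomialSeries_eq_rescale (a : R) :
    negBinomialSeries a = rescale (-1) (binomialSeries R (-a)) := by
  ext n
  rw [coeff_negBinomialSeries, coeff_rescale, binomialSeries_coeff, Ring.choose_neg', smul_eq_mul,
    mul_one, Units.smul_def, zsmul_eq_mul, Int.cast_negOnePow_natCast, ← mul_assoc, ← mul_pow]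
  simp

theorem negBinomialSeries_add (a b : R) :
    negBinomialSeries (a + b) = negBinomialSeries a * negBinomialSeries b := by
  simp only [negBinomialSeries_eq_rescale, neg_add, binomialSeries_add, map_mul]

theorem negBinomialSeries_zero : negBinomialSeries (0 : R) = 1 := by
  simp [negBinomialSeries_eq_rescale]

theorem negBinomialSeries_mul_natCast (a : R) (k : ℕ) :
    negBinomialSeries (a * k) = negBinomialSeries a ^ k := by
  induction k with
  | zero => simp [negBinomialSeries_zero]
  | succ k ih => rw [Nat.cast_succ, mul_add_one, negBinomialSeries_add, ih, pow_succ]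

theorem multichoose_add_one_eq_sum (a : R) (n : ℕ) :
    Ring.multichoose (a + 1) n = ∑ i ∈ range (n + 1), Ring.multichoose a i := by
  rw [← coeff_negBinomialSeries, negBinomialSeries_add, coeff_mul,
    Finset.Nat.sum_antidiagonal_eq_sum_range_succ_mk]
  simp

end Series

theorem hasSum_multichoose_mul_pow (a : ℝ) {r : ℝ} (hr : |r| < 1) :
    HasSum (fun n => Ring.multichoose a n * r ^ n) (1 / (1 - r) ^ a) := by
  have h := (Real.one_div_one_sub_rpow_hasFPowerSeriesOnBall_zero a).hasSum (y := r)
    (by simpa [enorm_eq_nnnorm, ← NNReal.coe_lt_coe] using hr)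
  simpa [Ring.multichoose_eq, FormalMultilinearSeries.ofScalars] using h

theorem multichoose_mul_pow_le {a r : ℝ} (ha : 0 ≤ a) (hr0 : 0 ≤ r) (hr1 : r < 1) (n : ℕ) :
    Ring.multichoose a n * r ^ n ≤ 1 / (1 - r) ^ a :=
  le_hasSum (hasSum_multichoose_mul_pow a (by rwa [abs_of_nonneg hr0])) n
    fun i _ => mul_nonneg (multichoose_nonneg ha i) (pow_nonneg hr0 i)

-- The exponent `a`, one less than the one given by `multichoose_mul_pow_le`, is what bounds
-- `Ring.multichoose (a + 1) n / n ^ a` uniformly in `n` below.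
theorem multichoose_add_one_mul_pow_le {a r : ℝ} (ha : 0 ≤ a) (hr0 : 0 ≤ r) (hr1 : r < 1) (n : ℕ) :
    Ring.multichoose (a + 1) n * r ^ n ≤ 1 / (1 - r) ^ a := by
  rw [multichoose_add_one_eq_sum, sum_mul]
  calc ∑ i ∈ range (n + 1), Ring.multichoose a i * r ^ n
      ≤ ∑ i ∈ range (n + 1), Ring.multichoose a i * r ^ i := by
        refine sum_le_sum fun i hi => mul_le_mul_of_nonneg_left ?_ (multichoose_nonneg ha i)
        exact pow_le_pow_of_le_one hr0 hr1.le (mem_range_succ_iff.1 hi)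
    _ ≤ 1 / (1 - r) ^ a :=
        sum_le_hasSum _ (fun i _ => mul_nonneg (multichoose_nonneg ha i) (pow_nonneg hr0 i))
          (hasSum_multichoose_mul_pow a (by rwa [abs_of_nonneg hr0]))

end NegBinomial

section GammaAsymptotics

theorem one_le_one_sub_div_pow_mul_exp {R : ℝ} (hR : 0 ≤ R) {n : ℕ} (hn : 2 * R ≤ n) :
    1 ≤ (1 - R / n) ^ n * Real.exp (2 * R) := by
  rcases n.eq_zero_or_pos with rfl | hn0
  · simpa using hR
  have hn0' : (0 : ℝ) < n := Nat.cast_pos.2 hn0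
  have hx : R / n ≤ 1 / 2 := by rw [div_le_iff₀ hn0']; linarith
  have hx0 : 0 ≤ R / n := by positivity
  have hexp : Real.exp (2 * R) = Real.exp (2 * (R / n)) ^ n := by
    rw [← Real.exp_nat_mul]; congr 1; field_simp
  rw [hexp, ← mul_pow]
  refine one_le_pow₀ ?_
  nlinarith [Real.add_one_le_exp (2 * (R / n))]

theorem multichoose_add_one_div_rpow_le {a R : ℝ} (ha : 0 ≤ a) (hR : 0 < R) {n : ℕ}
    (hn : 2 * R ≤ n) :
    Ring.multichoose (a + 1) n / (n : ℝ) ^ a ≤ Real.exp (2 * R) / R ^ a := by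
  have hn0 : (0 : ℝ) < n := by linarith
  have hR' : 0 < R / n := by positivity
  have hR1 : R / n ≤ 1 := by rw [div_le_one₀ hn0]; linarith
  have hnonneg : 0 ≤ Ring.multichoose (a + 1) n := multichoose_nonneg (by positivity) n
  have hbound := multichoose_add_one_mul_pow_le ha (sub_nonneg.2 hR1) (sub_lt_self 1 hR') n
  rw [sub_sub_cancel, Real.div_rpow hR.le hn0.le, one_div_div] at hbound
  calc Ring.multichoose (a + 1) n / (n : ℝ) ^ a
      ≤ Ring.multichoose (a + 1) n / (n : ℝ) ^ a * ((1 - R / n) ^ n * Real.exp (2 * R)) :=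
        le_mul_of_one_le_right (by positivity) (one_le_one_sub_div_pow_mul_exp hR.le hn)
    _ = Ring.multichoose (a + 1) n * (1 - R / n) ^ n * (Real.exp (2 * R) / (n : ℝ) ^ a) := by ring
    _ ≤ (n : ℝ) ^ a / R ^ a * (Real.exp (2 * R) / (n : ℝ) ^ a) := by gcongr
    _ = Real.exp (2 * R) / R ^ a := by field_simp

theorem tendsto_multichoose_div_rpow {s : ℝ} (hs : 0 < s) :
    Tendsto (fun n : ℕ => Ring.multichoose s n / (n : ℝ) ^ (s - 1)) atTop
      (𝓝 (Real.Gamma s)⁻¹) := by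
  have hlim := ((Real.GammaSeq_tendsto_Gamma s).inv₀ (Real.Gamma_pos_of_pos hs).ne').mul
    (tendsto_natCast_div_add_atTop s)
  rw [mul_one] at hlim
  refine hlim.congr' ?_
  filter_upwards [eventually_gt_atTop 0] with n hn
  have hn' : (0 : ℝ) < n := Nat.cast_pos.2 hn
  rw [Real.GammaSeq, multichoose_eq_prod_div, prod_range_succ, Real.rpow_sub_one hn'.ne']
  have hprod : ∏ j ∈ range n, (s + j) ≠ 0 := prod_ne_zero_iff.2 fun j _ => by positivity
  field_simp
  ring

theorem exists_eventually_multichoose_div_rpow_le {β C : ℝ} (hβ : 0 < β) (hC : 0 < C) :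
    ∃ K, ∀ᶠ n : ℕ in atTop, ∀ k : ℕ,
      Ring.multichoose (β * k + 1) n / (n : ℝ) ^ (β * k) ≤ K * C⁻¹ ^ k := by
  have hR : 0 < C ^ β⁻¹ := Real.rpow_pos_of_pos hC _
  refine ⟨Real.exp (2 * C ^ β⁻¹), ?_⟩
  filter_upwards [tendsto_natCast_atTop_atTop.eventually_ge_atTop (2 * C ^ β⁻¹)] with n hn k
  have h := multichoose_add_one_div_rpow_le (a := β * k) (by positivity) hR hn
  rwa [Real.rpow_mul hR.le, Real.rpow_inv_rpow hC.le hβ.ne', Real.rpow_natCast,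
    div_eq_mul_inv (Real.exp _), ← inv_pow] at h

theorem exists_inv_Gamma_le {β C : ℝ} (hβ : 0 < β) (hC : 0 < C) :
    ∃ K, ∀ k : ℕ, (Real.Gamma (β * k + 1))⁻¹ ≤ K * C⁻¹ ^ k := by
  obtain ⟨K, hK⟩ := exists_eventually_multichoose_div_rpow_le hβ hC
  refine ⟨K, fun k => ?_⟩
  have hlim := tendsto_multichoose_div_rpow (s := β * k + 1) (by positivity)
  rw [add_sub_cancel_right] at hlim
  exact le_of_tendsto hlim (hK.mono fun n hn => hn k)

theorem Gamma_mul_natCast_add_one_pos {β : ℝ} (hβ : 0 ≤ β) (k : ℕ) :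
    0 < Real.Gamma (β * k + 1) :=
  Real.Gamma_pos_of_pos (by positivity)

theorem summable_inv_Gamma_mul_pow {β : ℝ} (hβ : 0 < β) (r : ℝ) :
    Summable fun k : ℕ => (Real.Gamma (β * k + 1))⁻¹ * r ^ k := by
  have hC : 0 < |r| + 1 := by positivity
  obtain ⟨K, hK⟩ := exists_inv_Gamma_le hβ hC
  refine .of_norm_bounded (g := fun k => K * (|r| / (|r| + 1)) ^ k)
    ((summable_geometric_of_lt_one (by positivity) ?_).mul_left K) fun k => ?_
  · rw [div_lt_one hC]
    linarith
  · rw [norm_mul, norm_inv, norm_pow, Real.norm_eq_abs r,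
      Real.norm_of_nonneg (Gamma_mul_natCast_add_one_pos hβ.le k).le]
    calc (Real.Gamma (β * k + 1))⁻¹ * |r| ^ k ≤ K * (|r| + 1)⁻¹ ^ k * |r| ^ k := by
          gcongr; exact hK k
      _ = K * (|r| / (|r| + 1)) ^ k := by rw [mul_assoc, ← mul_pow, inv_mul_eq_div]

end GammaAsymptotics

section CompletelyMonotone

open PowerSeries

theorem one_sub_pow_mul_tsum_choose_mul_pow {R : Type*} [CommRing R] [TopologicalSpace R]
    [IsTopologicalRing R] [T2Space R] {x : R}
    (hx : ∀ m, Summable fun k : ℕ => (k.choose m : R) * x ^ k) (m : ℕ) :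
    (1 - x) ^ (m + 1) * ∑' k : ℕ, (k.choose m : R) * x ^ k = x ^ m := by
  induction m with
  | zero =>
    have h : Summable (x ^ ·) := by simpa using hx 0
    simpa using h.one_sub_mul_tsum_pow
  | succ m ih =>
    have hrec : ∑' k : ℕ, (k.choose (m + 1) : R) * x ^ k =
        x * ∑' k : ℕ, (k.choose m : R) * x ^ k +
          x * ∑' k : ℕ, (k.choose (m + 1) : R) * x ^ k := by
      conv_lhs => rw [(hx (m + 1)).tsum_eq_zero_add]
      rw [← mul_add, ← (hx m).tsum_add (hx (m + 1)), ← ((hx m).add (hx (m + 1))).tsum_mul_left]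
      simp only [Nat.choose_zero_succ, Nat.cast_zero, zero_mul, zero_add]
      refine tsum_congr fun k => ?_
      rw [Nat.choose_succ_succ]
      push_cast
      ring
    linear_combination (1 - x) ^ (m + 1) * hrec + x * ih

theorem coeff_nonneg_of_coeff_mul_nonneg {R : Type*} [CommRing R] [LinearOrder R]
    [IsStrictOrderedRing R] {P V : PowerSeries R} (hP0 : 0 < coeff 0 P)
    (hP : ∀ n, coeff (n + 1) P ≤ 0)
    (hPV : ∀ n, 0 ≤ coeff n (P * V)) (n : ℕ) : 0 ≤ coeff n V := by
  induction n using Nat.strong_induction_on with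
  | _ n ih =>
    have hn := hPV n
    rw [coeff_mul, Finset.Nat.sum_antidiagonal_eq_sum_range_succ_mk,
      sum_range_succ'] at hn
    have hrest : ∑ i ∈ range n,
        coeff (i + 1) P * coeff (n - (i + 1)) V ≤ 0 :=
      sum_nonpos fun i hi =>
        mul_nonpos_of_nonpos_of_nonneg (hP i) (ih _ (by have := mem_range.1 hi; omega))
    exact nonneg_of_mul_nonneg_right (hn.trans (add_le_of_nonpos_left hrest)) hP0

theorem coeff_nonneg_of_coeff_pow_mul_nonneg {R : Type*} [CommRing R] [LinearOrder R]
    [IsStrictOrderedRing R] {P V : PowerSeries R} (hP0 : 0 < coeff 0 P)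
    (hP : ∀ n, coeff (n + 1) P ≤ 0) (m : ℕ)
    (hPV : ∀ n, 0 ≤ coeff n (P ^ m * V)) (n : ℕ) : 0 ≤ coeff n V := by
  induction m with
  | zero => simpa using hPV n
  | succ m ih =>
    refine ih (coeff_nonneg_of_coeff_mul_nonneg hP0 hP fun n => ?_)
    rw [← mul_assoc, ← pow_succ']
    exact hPV n

theorem summable_choose_mul_multichoose {β c : ℝ} (hβ0 : 0 ≤ β) (hβ1 : β ≤ 1) (hc0 : 0 ≤ c)
    (hc1 : c < 1) (m n : ℕ) :
    Summable fun k : ℕ => (k.choose m : ℝ) * ((-c) ^ k * Ring.multichoose (β * k) n) := by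
  set r : ℝ := (1 - c) / 2 with hr
  have hr0 : 0 < r := by linarith
  have hr1 : 0 < 1 - r := by linarith
  have hq : c / (1 - r) < 1 := by rw [div_lt_one hr1]; linarith
  have hgeom := summable_pow_mul_geometric_of_norm_lt_one m (r := c / (1 - r))
    (by rwa [Real.norm_of_nonneg (by positivity)])
  refine .of_norm_bounded (hgeom.mul_right (r ^ n)⁻¹) fun k => ?_
  have hnonneg := multichoose_nonneg (a := β * k) (by positivity) n
  have hmulti : Ring.multichoose (β * k) n ≤ ((1 - r) ^ k)⁻¹ * (r ^ n)⁻¹ := by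
    rw [← div_eq_mul_inv _ (r ^ n), le_div_iff₀ (by positivity), ← one_div]
    refine (multichoose_mul_pow_le (by positivity) hr0.le (by linarith) n).trans ?_
    refine one_div_le_one_div_of_le (by positivity) ?_
    rw [← Real.rpow_natCast]
    exact Real.rpow_le_rpow_of_exponent_ge hr1 (by linarith)
      (mul_le_of_le_one_left k.cast_nonneg hβ1)
  rw [norm_mul, norm_mul, norm_pow, norm_neg, Real.norm_of_nonneg hc0,
    Real.norm_of_nonneg hnonneg, Real.norm_of_nonneg (Nat.cast_nonneg _)]
  calc (k.choose m : ℝ) * (c ^ k * Ring.multichoose (β * k) n)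
      ≤ (k : ℝ) ^ m * (c ^ k * (((1 - r) ^ k)⁻¹ * (r ^ n)⁻¹)) := by
        gcongr
        exact_mod_cast Nat.choose_le_pow k m
    _ = k ^ m * (c / (1 - r)) ^ k * (r ^ n)⁻¹ := by rw [div_pow]; ring

open scoped PowerSeries.WithPiTopology

theorem C_mul_negBinomialSeries_pow {R : Type*} [CommRing R] [BinomialRing R] (c β : R) (k : ℕ) :
    (C c * negBinomialSeries β) ^ k =
      C (c ^ k) * negBinomialSeries (β * k) := by
  rw [mul_pow, negBinomialSeries_mul_natCast, map_pow]

theorem summable_choose_mul_negBinomialSeries_pow {β c : ℝ} (hβ0 : 0 ≤ β) (hβ1 : β ≤ 1)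
    (hc0 : 0 ≤ c) (hc1 : c < 1) (m : ℕ) :
    Summable fun k : ℕ =>
      (k.choose m : PowerSeries ℝ) * (C (-c) * negBinomialSeries β) ^ k := by
  refine (WithPiTopology.summable_iff_summable_coeff ℝ).2 fun n => ?_
  refine (summable_choose_mul_multichoose hβ0 hβ1 hc0 hc1 m n).congr fun k => ?_
  rw [C_mul_negBinomialSeries_pow, ← map_natCast C, coeff_C_mul,
    coeff_C_mul, coeff_negBinomialSeries]

/-- The formal power series `(-1) ^ m ∑ k, k.choose m * (-c) ^ k * (1 - X) ^ (-(β * k + 1))`. After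
rescaling `c = lam / n ^ β`, its `n`-th coefficient approximates the mass that the fractional
Poisson measure gives to `m`. The sum converges coefficientwise for `0 ≤ β ≤ 1` and `0 ≤ c < 1`. -/
def discretizedWeightSeries (β c : ℝ) (m : ℕ) : PowerSeries ℝ :=
  C ((-1) ^ m) * negBinomialSeries 1 *
    ∑' k : ℕ, (k.choose m : PowerSeries ℝ) * (C (-c) * negBinomialSeries β) ^ k

theorem coeff_discretizedWeightSeries {β c : ℝ} (hβ0 : 0 ≤ β) (hβ1 : β ≤ 1) (hc0 : 0 ≤ c)
    (hc1 : c < 1) (m n : ℕ) :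
    coeff n (discretizedWeightSeries β c m) =
      (-1) ^ m * ∑' k : ℕ, (k.choose m : ℝ) * (-c) ^ k * Ring.multichoose (β * k + 1) n := by
  have hsum := (summable_choose_mul_negBinomialSeries_pow hβ0 hβ1 hc0 hc1 m).hasSum.mul_left
    (C ((-1) ^ m) * negBinomialSeries 1)
  have hcoeff := (WithPiTopology.hasSum_iff_hasSum_coeff ℝ).1 hsum n
  rw [discretizedWeightSeries, ← hcoeff.tsum_eq, ← tsum_mul_left]
  refine tsum_congr fun k => ?_
  rw [C_mul_negBinomialSeries_pow, ← coeff_negBinomialSeries, negBinomialSeries_add, mul_assoc,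
    ← coeff_C_mul, ← coeff_C_mul, ← map_natCast C,
    map_mul C]
  congr 1
  ring

theorem pow_mul_discretizedWeightSeries {β c : ℝ} (hβ0 : 0 ≤ β) (hβ1 : β ≤ 1) (hc0 : 0 ≤ c)
    (hc1 : c < 1) (m : ℕ) :
    (negBinomialSeries (-β) + C c) ^ (m + 1) * discretizedWeightSeries β c m =
      C (c ^ m) * negBinomialSeries (1 - β) := by
  have hgeom := one_sub_pow_mul_tsum_choose_mul_pow
    (summable_choose_mul_negBinomialSeries_pow hβ0 hβ1 hc0 hc1) m
  set x : PowerSeries ℝ := C (-c) * negBinomialSeries β with hx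
  have hinv : negBinomialSeries (-β) * negBinomialSeries β = 1 := by
    rw [← negBinomialSeries_add, neg_add_cancel, negBinomialSeries_zero]
  have hfactor : negBinomialSeries (-β) + C c = negBinomialSeries (-β) * (1 - x) := by
    rw [hx, map_neg]
    linear_combination -C c * hinv
  have hsign : C ((-1) ^ m) * x ^ m =
      C (c ^ m) * negBinomialSeries β ^ m := by
    rw [hx, mul_pow, ← map_pow, ← mul_assoc, ← map_mul, ← mul_pow, neg_one_mul, neg_neg]
  calc (negBinomialSeries (-β) + C c) ^ (m + 1) * discretizedWeightSeries β c m
      = negBinomialSeries (-β) ^ (m + 1) * negBinomialSeries 1 *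
          (C ((-1) ^ m) * x ^ m) := by
        rw [hfactor, discretizedWeightSeries, ← hx, ← hgeom, mul_pow]
        ring
    _ = C (c ^ m) * (negBinomialSeries (-β) * negBinomialSeries β) ^ m *
          (negBinomialSeries 1 * negBinomialSeries (-β)) := by
        rw [hsign]
        ring
    _ = C (c ^ m) * negBinomialSeries (1 - β) := by
        rw [hinv, one_pow, mul_one, sub_eq_add_neg, negBinomialSeries_add]

theorem coeff_discretizedWeightSeries_nonneg {β c : ℝ} (hβ0 : 0 ≤ β) (hβ1 : β ≤ 1) (hc0 : 0 ≤ c)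
    (hc1 : c < 1) (m n : ℕ) : 0 ≤ coeff n (discretizedWeightSeries β c m) := by
  refine coeff_nonneg_of_coeff_pow_mul_nonneg (P := negBinomialSeries (-β) + C c)
    ?_ (fun i => ?_) (m + 1) (fun i => ?_) n
  · rw [map_add, coeff_negBinomialSeries, Ring.multichoose_zero_right, coeff_zero_C]
    positivity
  · simpa [coeff_C] using multichoose_neg_succ_nonpos hβ0 hβ1 i
  · rw [pow_mul_discretizedWeightSeries hβ0 hβ1 hc0 hc1, coeff_C_mul,
      coeff_negBinomialSeries]
    exact mul_nonneg (pow_nonneg hc0 m) (multichoose_nonneg (sub_nonneg.2 hβ1) i)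

end CompletelyMonotone

section BinomialExpansion

theorem hasSum_choose_mul_pow {R : Type*} [CommSemiring R] [TopologicalSpace R] (x y : R) (k : ℕ) :
    HasSum (fun m => (k.choose m : R) * x ^ (k - m) * y ^ m) ((x + y) ^ k) := by
  rw [add_comm x y, add_pow, sum_congr rfl fun m _ =>
    show y ^ m * x ^ (k - m) * (k.choose m : R) = k.choose m * x ^ (k - m) * y ^ m by ring]
  refine hasSum_sum_of_ne_finset_zero fun m hm => ?_
  rw [Nat.choose_eq_zero_of_lt (by simpa [Nat.lt_succ_iff] using hm), Nat.cast_zero, zero_mul,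
    zero_mul]

variable {𝕜 : Type*} [RCLike 𝕜]

theorem hasSum_tsum_choose_mul_pow {a : ℕ → 𝕜} {x y : 𝕜}
    (ha : Summable fun k => ‖a k‖ * (‖x‖ + ‖y‖) ^ k) :
    HasSum (fun m => (∑' k, a k * (k.choose m * x ^ (k - m))) * y ^ m)
      (∑' k, a k * (x + y) ^ k) := by
  set F : ℕ × ℕ → 𝕜 := fun p => a p.1 * (p.1.choose p.2 * x ^ (p.1 - p.2) * y ^ p.2)
  have hnorm (k : ℕ) : HasSum (fun m => ‖F (k, m)‖) (‖a k‖ * (‖x‖ + ‖y‖) ^ k) := by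
    simpa [F] using (hasSum_choose_mul_pow ‖x‖ ‖y‖ k).mul_left ‖a k‖
  have hF : Summable F := .of_norm <| (summable_prod_of_nonneg fun _ => norm_nonneg _).2
    ⟨fun k => (hnorm k).summable, ha.congr fun k => (hnorm k).tsum_eq.symm⟩
  have hrow (k : ℕ) : ∑' m, F (k, m) = a k * (x + y) ^ k :=
    ((hasSum_choose_mul_pow x y k).mul_left (a k)).tsum_eq
  have hcol (m : ℕ) : ∑' k, F (k, m) = (∑' k, a k * (k.choose m * x ^ (k - m))) * y ^ m := by
    rw [← tsum_mul_right]
    exact tsum_congr fun k => by ring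
  have hsum : ∑' m, ∑' k, F (k, m) = ∑' k, a k * (x + y) ^ k :=
    (Summable.tsum_comm (f := fun k m => F (k, m)) hF).trans (tsum_congr hrow)
  rw [← hsum, ← funext hcol]
  exact hF.prod_symm.prod.hasSum

theorem iteratedDeriv_eq_of_hasSum {f : 𝕜 → 𝕜} {b : ℕ → 𝕜} {x : 𝕜}
    (h : ∀ᶠ y in 𝓝 0, HasSum (fun n => b n * y ^ n) (f (x + y))) (n : ℕ) :
    iteratedDeriv n f x = n.factorial * b n := by
  have hf : HasFPowerSeriesAt f (FormalMultilinearSeries.ofScalars 𝕜 b) x := by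
    rw [hasFPowerSeriesAt_iff]
    simpa [mul_comm] using h
  obtain ⟨r, hr⟩ := hf
  rw [iteratedDeriv_eq_iteratedFDeriv, ← hr.factorial_smul]
  simp

end BinomialExpansion

section FracPoisson

/-- The mass `lam ^ m / m! * E_β⁽ᵐ⁾(-lam)` of the fractional Poisson measure at `m`. -/
def fracPoissonWeight (lam β : ℝ) (m : ℕ) : ℝ :=
  lam ^ m / m.factorial * iteratedDeriv m (mittagLefflerR β) (-lam)

variable {lam β : ℝ}

theorem fracPoissonWeight_eq_pow_mul_tsum (hβ : 0 < β) (m : ℕ) :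
    fracPoissonWeight lam β m = lam ^ m *
      ∑' k : ℕ, (Real.Gamma (β * k + 1))⁻¹ * (k.choose m * (-lam) ^ (k - m)) := by
  have hderiv := iteratedDeriv_eq_of_hasSum (f := mittagLefflerR β) (x := -lam)
    (b := fun m => ∑' k : ℕ, (Real.Gamma (β * k + 1))⁻¹ * (k.choose m * (-lam) ^ (k - m)))
    (.of_forall fun y => ?_) m
  · rw [fracPoissonWeight, hderiv]
    field_simp
  · simp only [mittagLefflerR, div_eq_inv_mul]
    refine hasSum_tsum_choose_mul_pow ?_
    simpa [abs_of_pos (Gamma_mul_natCast_add_one_pos hβ.le _)] using summable_inv_Gamma_mul_pow hβ _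

theorem fracPoissonWeight_eq_neg_one_pow_mul_tsum (hβ : 0 < β) (m : ℕ) :
    fracPoissonWeight lam β m = (-1) ^ m *
      ∑' k : ℕ, (k.choose m : ℝ) * (-lam) ^ k * (Real.Gamma (β * k + 1))⁻¹ := by
  rw [fracPoissonWeight_eq_pow_mul_tsum hβ, ← tsum_mul_left, ← tsum_mul_left]
  refine tsum_congr fun k => ?_
  rcases lt_or_ge k m with hkm | hmk
  · simp [Nat.choose_eq_zero_of_lt hkm]
  · obtain ⟨d, rfl⟩ := Nat.exists_eq_add_of_le hmk
    have hsign : lam ^ m = (-1) ^ m * (-lam) ^ m := by rw [← mul_pow, neg_one_mul, neg_neg]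
    rw [Nat.add_sub_cancel_left, hsign, pow_add]
    ring

theorem tendsto_tsum_choose_mul_multichoose (hβ : 0 < β) (x : ℝ) (m : ℕ) :
    Tendsto (fun n : ℕ => ∑' k : ℕ,
        (k.choose m : ℝ) * x ^ k * (Ring.multichoose (β * k + 1) n / (n : ℝ) ^ (β * k)))
      atTop (𝓝 (∑' k : ℕ, (k.choose m : ℝ) * x ^ k * (Real.Gamma (β * k + 1))⁻¹)) := by
  have hC : 0 < 2 * |x| + 1 := by positivity
  obtain ⟨K, hK⟩ := exists_eventually_multichoose_div_rpow_le hβ hC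
  refine tendsto_tsum_of_dominated_convergence
    (bound := fun k => K * (2 * |x| / (2 * |x| + 1)) ^ k) ?_ (fun k => ?_) ?_
  · refine (summable_geometric_of_lt_one (by positivity) ?_).mul_left K
    rw [div_lt_one hC]
    linarith
  · have hlim := tendsto_multichoose_div_rpow (s := β * k + 1) (by positivity)
    rw [add_sub_cancel_right] at hlim
    exact hlim.const_mul _
  · filter_upwards [hK] with n hn k
    have hnonneg : 0 ≤ Ring.multichoose (β * k + 1) n / (n : ℝ) ^ (β * k) :=
      div_nonneg (multichoose_nonneg (by positivity) n) (by positivity)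
    have hchoose : (k.choose m : ℝ) ≤ 2 ^ k := by exact_mod_cast Nat.choose_le_two_pow k m
    rw [norm_mul, norm_mul, norm_pow, Real.norm_natCast, Real.norm_eq_abs,
      Real.norm_of_nonneg hnonneg]
    calc (k.choose m : ℝ) * |x| ^ k * (Ring.multichoose (β * k + 1) n / (n : ℝ) ^ (β * k))
        ≤ 2 ^ k * |x| ^ k * (K * (2 * |x| + 1)⁻¹ ^ k) := by
          gcongr
          exact hn k
      _ = K * (2 * |x| / (2 * |x| + 1)) ^ k := by
          rw [div_eq_mul_inv, mul_pow, mul_pow]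
          ring

theorem fracPoissonWeight_nonneg (hlam : 0 ≤ lam) (hβ0 : 0 < β) (hβ1 : β ≤ 1) (m : ℕ) :
    0 ≤ fracPoissonWeight lam β m := by
  rw [fracPoissonWeight_eq_neg_one_pow_mul_tsum hβ0]
  refine ge_of_tendsto ((tendsto_tsum_choose_mul_multichoose hβ0 (-lam) m).const_mul _) ?_
  have hlarge : ∀ᶠ n : ℕ in atTop, lam < (n : ℝ) ^ β :=
    ((tendsto_rpow_atTop hβ0).comp tendsto_natCast_atTop_atTop).eventually_gt_atTop lam
  filter_upwards [hlarge] with n hn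
  have hn0 : 0 < (n : ℝ) ^ β := hlam.trans_lt hn
  have h := coeff_discretizedWeightSeries_nonneg hβ0.le hβ1 (c := lam / (n : ℝ) ^ β)
    (by positivity) ((div_lt_one hn0).2 hn) m n
  rw [coeff_discretizedWeightSeries hβ0.le hβ1 (by positivity) ((div_lt_one hn0).2 hn)] at h
  convert! h using 4 with k
  rw [Real.rpow_mul n.cast_nonneg, Real.rpow_natCast, ← neg_div, div_pow]
  ring

theorem hasSum_fracPoissonWeight_mul_pow (hβ : 0 < β) (w : ℂ) :
    HasSum (fun m => (fracPoissonWeight lam β m : ℂ) * w ^ m)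
      (mittagLeffler β (lam * (w - 1))) := by
  have hsummable : Summable fun k : ℕ =>
      ‖(((Real.Gamma (β * k + 1))⁻¹ : ℝ) : ℂ)‖ * (‖((-lam : ℝ) : ℂ)‖ + ‖(lam : ℂ) * w‖) ^ k := by
    simpa [abs_of_pos (Gamma_mul_natCast_add_one_pos hβ.le _)] using summable_inv_Gamma_mul_pow hβ _
  convert! hasSum_tsum_choose_mul_pow hsummable using 1
  · ext m
    rw [fracPoissonWeight_eq_pow_mul_tsum hβ, mul_pow]
    push_cast
    ring
  · rw [mittagLeffler]
    refine tsum_congr fun k => ?_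
    rw [Complex.Gamma_ofReal, Complex.ofReal_inv, div_eq_inv_mul]
    congr 2
    push_cast
    ring

theorem mittagLeffler_zero (β : ℝ) : mittagLeffler β 0 = 1 := by
  rw [mittagLeffler, tsum_eq_single 0 fun k hk => by simp [hk]]
  simp

theorem isProbabilityMeasure_fracPoisson (hlam : 0 ≤ lam) (hβ0 : 0 < β) (hβ1 : β ≤ 1) :
    IsProbabilityMeasure (fracPoisson lam β) := by
  have htotal : HasSum (fracPoissonWeight lam β) 1 := by
    have h := hasSum_fracPoissonWeight_mul_pow (lam := lam) hβ0 1
    simp only [one_pow, mul_one, sub_self, mul_zero, mittagLeffler_zero] at h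
    rw [← Complex.ofReal_one] at h
    exact Complex.hasSum_ofReal.1 h
  exact HasSum.isProbabilityMeasure_sum_dirac (fracPoissonWeight_nonneg hlam hβ0 hβ1) htotal

theorem integrableExpSet_fracPoisson (hlam : 0 ≤ lam) (hβ0 : 0 < β) (hβ1 : β ≤ 1) :
    integrableExpSet id (fracPoisson lam β) = Set.univ := by
  refine Set.eq_univ_of_forall fun t => integrable_sum_dirac (fun _ => ENNReal.ofReal_ne_top) ?_
  have h := (hasSum_fracPoissonWeight_mul_pow (lam := lam) hβ0 (Real.exp t : ℝ)).summable
  refine (Complex.summable_ofReal.1 (by exact_mod_cast h)).congr fun m => ?_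
  rw [← fracPoissonWeight, ENNReal.toReal_ofReal (fracPoissonWeight_nonneg hlam hβ0 hβ1 m),
    Real.norm_eq_abs, Real.abs_exp, id, mul_comm t, Real.exp_nat_mul]

theorem complexMGF_fracPoisson (hlam : 0 ≤ lam) (hβ0 : 0 < β) (hβ1 : β ≤ 1) (z : ℂ) :
    complexMGF id (fracPoisson lam β) z = mittagLeffler β (lam * (Complex.exp z - 1)) := by
  rw [← (hasSum_fracPoissonWeight_mul_pow hβ0 (Complex.exp z)).tsum_eq, complexMGF, fracPoisson,
    integral_sum_dirac fun _ => ENNReal.ofReal_ne_top]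
  refine tsum_congr fun m => ?_
  rw [← fracPoissonWeight, ENNReal.toReal_ofReal (fracPoissonWeight_nonneg hlam hβ0 hβ1 m),
    Complex.real_smul, ← Complex.exp_nat_mul, mul_comm z]
  simp

end FracPoisson

section BellPolynomials

open PowerSeries
open scoped ContDiff

theorem coeff_sum_monomial_pow {R ι : Type*} [CommSemiring R] [Fintype ι] [DecidableEq ι]
    (e : ι → ℕ) (a : ι → R) (k d : ℕ) :
    coeff d ((∑ i, monomial (e i) (a i)) ^ k) =
      ∑ j ∈ (univ.piAntidiag k).filter (fun j => ∑ i, e i * j i = d),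
        Nat.multinomial univ j * ∏ i, a i ^ j i := by
  rw [sum_pow_eq_sum_piAntidiag, map_sum, sum_filter]
  refine sum_congr rfl fun j _ => ?_
  simp only [monomial_pow, prod_monomial, ← map_natCast (C (R := R)), coeff_C_mul, coeff_monomial,
    mul_comm (j _), eq_comm (a := d), mul_ite, mul_zero]

theorem coeff_pow_eq_coeff_sum_monomial_pow {R : Type*} [CommSemiring R] (h : PowerSeries R)
    (k d : ℕ) :
    coeff d (h ^ k) = coeff d ((∑ i : Fin (d + 1), monomial (i : ℕ) (coeff i h)) ^ k) := by
  have htrunc : (trunc (d + 1) h : PowerSeries R) =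
      ∑ i : Fin (d + 1), monomial (i : ℕ) (coeff i h) := by
    ext m
    rw [Polynomial.coeff_coe, coeff_trunc, map_sum]
    simp only [coeff_monomial]
    rw [Fin.sum_univ_eq_sum_range fun i => if m = i then coeff i h else 0, sum_ite_eq]
    simp only [mem_range]
  rw [← coeff_coe_trunc_of_lt d.lt_succ_self, ← trunc_trunc_pow,
    coeff_coe_trunc_of_lt d.lt_succ_self, htrunc]

theorem factorial_mul_bellPoly (x : ℕ → ℂ) {n k : ℕ} (hk : k ≤ n) :
    k.factorial * bellPoly n k x =
      n.factorial * coeff n ((X * PowerSeries.mk fun i => x (i + 1) / (i + 1).factorial) ^ k) := by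
  have hindex : (Fintype.piFinset fun _ : Fin (n - k + 1) => range (n + 1)).filter
        (fun j => (∑ i, j i) = k ∧ (∑ i, (i.1 + 1) * j i) = n) =
      (univ.piAntidiag k).filter fun j => ∑ i : Fin (n - k + 1), i.1 * j i = n - k := by
    ext j
    simp only [mem_filter, Fintype.mem_piFinset, mem_range, mem_piAntidiag, mem_univ,
      implies_true, and_true, add_one_mul, sum_add_distrib]
    change _ ∧ ∑ i, j i = k ∧ _ ↔ ∑ i, j i = k ∧ _
    refine ⟨fun ⟨_, hsum, _⟩ => ⟨hsum, by omega⟩, fun ⟨hsum, _⟩ => ⟨fun i => ?_, hsum, by omega⟩⟩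
    have hle : j i ≤ ∑ i, j i := single_le_sum (fun _ _ => Nat.zero_le _) (mem_univ i)
    omega
  rw [mul_pow, coeff_X_pow_mul', if_pos hk, coeff_pow_eq_coeff_sum_monomial_pow,
    coeff_sum_monomial_pow, bellPoly, hindex, mul_sum, mul_sum]
  refine sum_congr rfl fun j hj => ?_
  have hmultinomial : (∏ i, ((j i).factorial : ℂ)) * Nat.multinomial univ j = k.factorial := by
    have h := Nat.multinomial_spec univ j
    rw [(mem_piAntidiag.1 (mem_filter.1 hj).1).1] at h
    exact_mod_cast h
  have hne : ∏ i, ((j i).factorial : ℂ) ≠ 0 :=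
    prod_ne_zero_iff.2 fun i _ => Nat.cast_ne_zero.2 (j i).factorial_ne_zero
  simp only [coeff_mk]
  rw [← hmultinomial]
  field_simp

theorem coeff_eq_sum_of_one_add_mul_eq_one {R : Type*} [CommRing R] {g H : PowerSeries R}
    (hg : X ∣ g) (hH : (1 + g) * H = 1) (n : ℕ) :
    coeff n H = ∑ k ∈ range (n + 1), (-1) ^ k * coeff n (g ^ k) := by
  have hgeom : H = ∑ k ∈ range (n + 1), (-g) ^ k + (-g) ^ (n + 1) * H := by
    linear_combination (-H) * mul_neg_geom_sum (-g) (n + 1) + (∑ k ∈ range (n + 1), (-g) ^ k) * hH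
  have htail : coeff n ((-g) ^ (n + 1) * H) = 0 :=
    X_pow_dvd_iff.1 ((pow_dvd_pow_of_dvd ((dvd_neg).2 hg) _).mul_right _) n n.lt_succ_self
  rw [hgeom, map_add, htail, add_zero, map_sum]
  refine sum_congr rfl fun k _ => ?_
  rw [neg_pow, ← map_one (C (R := R)), ← map_neg, ← map_pow, coeff_C_mul]

/-- The formal Taylor series of `f` at `x`, which turns the Leibniz rule into multiplication of
power series. -/
def taylorPowerSeries {𝕜 : Type*} [NontriviallyNormedField 𝕜] (f : 𝕜 → 𝕜) (x : 𝕜) :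
    PowerSeries 𝕜 :=
  PowerSeries.mk fun n => iteratedDeriv n f x / n.factorial

theorem taylorPowerSeries_mul {𝕜 : Type*} [NontriviallyNormedField 𝕜] [CharZero 𝕜] {f g : 𝕜 → 𝕜}
    {x : 𝕜} (hf : ContDiffAt 𝕜 ∞ f x) (hg : ContDiffAt 𝕜 ∞ g x) :
    taylorPowerSeries (fun z => f z * g z) x = taylorPowerSeries f x * taylorPowerSeries g x := by
  ext n
  simp only [taylorPowerSeries, coeff_mul, coeff_mk]
  rw [iteratedDeriv_fun_mul (hf.of_le (mod_cast le_top)) (hg.of_le (mod_cast le_top)), sum_div,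
    Finset.Nat.sum_antidiagonal_eq_sum_range_succ_mk]
  refine sum_congr rfl fun i hi => ?_
  rw [Nat.cast_choose 𝕜 (mem_range_succ_iff.1 hi)]
  have hn : (n.factorial : 𝕜) ≠ 0 := Nat.cast_ne_zero.2 n.factorial_ne_zero
  field_simp

theorem iteratedDeriv_inv_eq_sum_bellPoly {f : ℂ → ℂ} {x : ℂ} (hf : AnalyticAt ℂ f x)
    (hfx : f x = 1) (n : ℕ) :
    iteratedDeriv n (fun z => (f z)⁻¹) x =
      ∑ k ∈ range (n + 1),
        (-1) ^ k * k.factorial * bellPoly n k fun j => iteratedDeriv j f x := by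
  have hfx0 : f x ≠ 0 := by simp [hfx]
  have hone : taylorPowerSeries (fun z => f z * (f z)⁻¹) x = 1 := by
    have heq : (fun z => f z * (f z)⁻¹) =ᶠ[𝓝 x] fun _ => 1 :=
      (hf.continuousAt.eventually_ne hfx0).mono fun z hz => mul_inv_cancel₀ hz
    ext m
    rcases m with _ | m <;>
      simp [taylorPowerSeries, heq.iteratedDeriv_eq, iteratedDeriv_const, coeff_one]
  have hsplit : taylorPowerSeries f x =
      1 + X * PowerSeries.mk fun i => iteratedDeriv (i + 1) f x / (i + 1).factorial := by
    rw [eq_X_mul_shift_add_const (taylorPowerSeries f x), add_comm]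
    simp [taylorPowerSeries, hfx]
  rw [taylorPowerSeries_mul (g := fun z => (f z)⁻¹) hf.contDiffAt (hf.contDiffAt.inv hfx0),
    hsplit] at hone
  have hcoeff := coeff_eq_sum_of_one_add_mul_eq_one (dvd_mul_right _ _) hone n
  rw [taylorPowerSeries, coeff_mk, div_eq_iff (Nat.cast_ne_zero.2 n.factorial_ne_zero),
    sum_mul] at hcoeff
  rw [hcoeff]
  refine sum_congr rfl fun k hk => ?_
  rw [mul_assoc, mul_assoc, factorial_mul_bellPoly _ (mem_range_succ_iff.1 hk),
    mul_comm (coeff _ _)]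

end BellPolynomials

theorem iteratedDeriv_inv_complexMGF_eq_sum_bellPoly {Ω : Type*} [MeasurableSpace Ω]
    {μ : Measure Ω} [IsProbabilityMeasure μ] {X : Ω → ℝ}
    (hX : 0 ∈ interior (integrableExpSet X μ)) (n : ℕ) :
    iteratedDeriv n (fun z => (complexMGF X μ z)⁻¹) 0 =
      ∑ k ∈ range (n + 1), (-1) ^ k * k.factorial *
        bellPoly n k fun j => ((∫ ω, X ω ^ j ∂μ : ℝ) : ℂ) := by
  have hmoment (j : ℕ) :
      iteratedDeriv j (complexMGF X μ) 0 = ((∫ ω, X ω ^ j ∂μ : ℝ) : ℂ) := by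
    rw [iteratedDeriv_complexMGF (by simpa using hX), ← integral_complex_ofReal]
    simp
  have hzero : complexMGF X μ 0 = 1 := by simp [complexMGF]
  rw [iteratedDeriv_inv_eq_sum_bellPoly (analyticAt_complexMGF (by simpa using hX)) hzero]
  simp only [hmoment]

theorem stmt16 (lam β : ℝ) (hlam : 0 < lam) (hβ0 : 0 < β) (hβ1 : β ≤ 1) (n : ℕ) :
    appell lam β n 0 =
      ∑ k ∈ Finset.range (n + 1), (-1 : ℂ) ^ k * (k.factorial : ℂ) *
        bellPoly n k (fun j => ((fpMoment lam β j : ℝ) : ℂ)) := by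
  have := isProbabilityMeasure_fracPoisson hlam.le hβ0 hβ1
  have hinterior : 0 ∈ interior (integrableExpSet id (fracPoisson lam β)) := by
    simp [integrableExpSet_fracPoisson hlam.le hβ0 hβ1]
  calc appell lam β n 0
      = iteratedDeriv n (fun z => (complexMGF id (fracPoisson lam β) z)⁻¹) 0 := by
        simp [appell, complexMGF_fracPoisson hlam.le hβ0 hβ1]
    _ = _ := iteratedDeriv_inv_complexMGF_eq_sum_bellPoly hinterior n
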